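/- arXiv:2503.11506 — 4 statements merged into one kernel-verified Lean document; each statement's English description precedes it below -/
import Mathlib

section
/- Let a < b, let α, β ∈ (0,1] with α + β > 1, let f ∈ C^{0,α}([a,b]) and g ∈ C^{0,β}([a,b]), and let α' ∈ (0,α], β' ∈ (0,β] satisfy α' + β' > 1. Then there exists a real number I (the Young integral ∫_a^b f dg) such that for every pair of sequences of Lipschitz functions f_k, g_k : [a,b] → ℝ with ‖f_k − f‖_{C^{0,α'}} → 0 and ‖g_k − g‖_{C^{0,β'}} → 0, one has ∫_a^b f_k(x)·g_k'(x) dx → I as k → ∞; moreover I does not depend on the choice of α' and β'. In addition, there is a constant C, depending only on α, β, α', β' and b − a, such that if f̃ ∈ C^{0,α}([a,b]), g̃ ∈ C^{0,β}([a,b]) and Ĩ denotes the corresponding Young integral ∫_a^b f̃ dg̃, then |I − Ĩ| ≤ C·( ‖f − f̃‖_{C^{0,α}}·[g]_β + ‖f̃‖_{C^{0,α}}·[g − g̃]_β ). -/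
open Set

/-- `h` is Lipschitz on `[a,b]`. -/
def LipOn (a b : ℝ) (h : ℝ → ℝ) : Prop :=
  ∃ L : NNReal, LipschitzOnWith L h (Icc a b)

/-- The sequence `hk` converges to `h` in the `C^{0,γ}([a,b])` norm. -/
def ConvH (γ a b : ℝ) (hk : ℕ → ℝ → ℝ) (h : ℝ → ℝ) : Prop :=
  ∀ δ : ℝ, 0 < δ → ∃ N : ℕ, ∀ k ≥ N,
    (∀ x ∈ Icc a b, |hk k x - h x| ≤ δ) ∧
    (∀ x ∈ Icc a b, ∀ y ∈ Icc a b,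
      |(hk k x - h x) - (hk k y - h y)| ≤ δ * |x - y| ^ γ)

/-- `I` is the Young integral `∫_a^b f dg`: for every admissible pair of exponents
`(α', β')` and every pair of sequences of Lipschitz functions converging to `f` and `g` in
`C^{0,α'}` resp. `C^{0,β'}`, the integrals `∫_a^b f_k g_k'` converge to `I`.  In particular
`I` does not depend on the choice of `α'` and `β'`. -/
def IsYoungIntegral (a b α β : ℝ) (f g : ℝ → ℝ) (I : ℝ) : Prop :=
  ∀ α' β' : ℝ, 0 < α' → α' ≤ α → 0 < β' → β' ≤ β → 1 < α' + β' →
    ∀ fk gk : ℕ → ℝ → ℝ,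
      (∀ k, LipOn a b (fk k)) → (∀ k, LipOn a b (gk k)) →
      ConvH α' a b fk f → ConvH β' a b gk g →
      Filter.Tendsto (fun k => ∫ x in a..b, fk k x * deriv (gk k) x)
        Filter.atTop (nhds I)

/-- `h` satisfies the `γ`-Hölder condition on `[a,b]` with constant `M`. -/
def HolderBound (a b γ M : ℝ) (h : ℝ → ℝ) : Prop :=
  ∀ x ∈ Icc a b, ∀ y ∈ Icc a b, |h x - h y| ≤ M * |x - y| ^ γ

namespace HolderBound

variable {a b γ M : ℝ} {h : ℝ → ℝ}

theorem nonneg (hh : HolderBound a b γ M h) (hab : a < b) : 0 ≤ M := by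
  have h1 := (abs_nonneg _).trans (hh a (left_mem_Icc.2 hab.le) b (right_mem_Icc.2 hab.le))
  have h2 : 0 < |a - b| ^ γ := Real.rpow_pos_of_pos (abs_pos.2 (sub_ne_zero.2 hab.ne)) _
  exact nonneg_of_mul_nonneg_left h1 h2

theorem abs_le (hh : HolderBound a b γ M h) (hab : a < b) (hγ : 0 ≤ γ) :
    ∀ x ∈ Icc a b, |h x| ≤ |h a| + M * (b - a) ^ γ := by
  intro x hx
  have h1 := hh x hx a (left_mem_Icc.2 hab.le)
  have h2 : |x - a| ^ γ ≤ (b - a) ^ γ := by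
    apply Real.rpow_le_rpow (abs_nonneg _) _ hγ
    rw [abs_of_nonneg (by linarith [hx.1])]
    linarith [hx.2]
  have h3 := mul_le_mul_of_nonneg_left h2 (hh.nonneg hab)
  have h4 := abs_sub_abs_le_abs_sub (h x) (h a)
  linarith

theorem mono_const {M' : ℝ} (hh : HolderBound a b γ M h) (hM : M ≤ M') :
    HolderBound a b γ M' h := fun x hx y hy =>
  (hh x hx y hy).trans (mul_le_mul_of_nonneg_right hM (by positivity))

theorem mono_exponent {γ' : ℝ} (hh : HolderBound a b γ M h) (hab : a < b) (hγ' : 0 < γ')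
    (hle : γ' ≤ γ) : HolderBound a b γ' (M * (b - a) ^ (γ - γ')) h := by
  intro x hx y hy
  have hd : |x - y| ≤ b - a := by
    rw [_root_.abs_le]; constructor <;> linarith [hx.1, hx.2, hy.1, hy.2]
  calc |h x - h y| ≤ M * |x - y| ^ γ := hh x hx y hy
    _ = M * (|x - y| ^ (γ - γ') * |x - y| ^ γ') := by
      rw [← Real.rpow_add_of_nonneg (abs_nonneg _) (by linarith) hγ'.le, sub_add_cancel]
    _ ≤ M * ((b - a) ^ (γ - γ') * |x - y| ^ γ') := by
      have := hh.nonneg hab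
      have := Real.rpow_le_rpow (abs_nonneg _) hd (sub_nonneg.2 hle)
      gcongr
    _ = _ := by ring

end HolderBound

/-- The `i`-th point of the subdivision of `[a,b]` into `2 ^ n` equal parts. -/
noncomputable def dyadicPoint (a b : ℝ) (n i : ℕ) : ℝ := a + (b - a) * i / 2 ^ n

/-- The left Riemann–Stieltjes sum of `f` against `g` along the `n`-th dyadic subdivision. -/
noncomputable def dyadicSum (a b : ℝ) (f g : ℝ → ℝ) (n : ℕ) : ℝ :=
  ∑ i ∈ Finset.range (2 ^ n),
    f (dyadicPoint a b n i) * (g (dyadicPoint a b n (i + 1)) - g (dyadicPoint a b n i))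

section Dyadic

variable {a b : ℝ}

theorem dyadicPoint_zero (n : ℕ) : dyadicPoint a b n 0 = a := by simp [dyadicPoint]

theorem dyadicPoint_last (n : ℕ) : dyadicPoint a b n (2 ^ n) = b := by
  simp [dyadicPoint]

theorem dyadicPoint_succ_sub (n i : ℕ) :
    dyadicPoint a b n (i + 1) - dyadicPoint a b n i = (b - a) / 2 ^ n := by
  simp only [dyadicPoint]; push_cast; ring

theorem dyadicPoint_succ_two_mul (n i : ℕ) :
    dyadicPoint a b (n + 1) (2 * i) = dyadicPoint a b n i := by
  simp only [dyadicPoint, pow_succ]; push_cast; field_simp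

theorem dyadicPoint_mem (hab : a ≤ b) {n i : ℕ} (hi : i ≤ 2 ^ n) :
    dyadicPoint a b n i ∈ Icc a b := by
  have hi' : (i : ℝ) ≤ 2 ^ n := by exact_mod_cast hi
  have h0 : 0 ≤ b - a := sub_nonneg.2 hab
  constructor
  · have : 0 ≤ (b - a) * i / 2 ^ n := by positivity
    simp only [dyadicPoint]; linarith
  · have : (b - a) * i / 2 ^ n ≤ b - a := by
      rw [div_le_iff₀ (by positivity)]; gcongr
    simp only [dyadicPoint]; linarith

theorem Finset.sum_range_two_mul_eq (F : ℕ → ℝ) (m : ℕ) :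
    ∑ i ∈ Finset.range (2 * m), F i = ∑ i ∈ Finset.range m, (F (2 * i) + F (2 * i + 1)) := by
  induction m with
  | zero => simp
  | succ k ih =>
    rw [show 2 * (k + 1) = 2 * k + 1 + 1 by ring, Finset.sum_range_succ, Finset.sum_range_succ,
      Finset.sum_range_succ, ih, add_assoc]

theorem dyadicSum_succ_sub (f g : ℝ → ℝ) (n : ℕ) :
    dyadicSum a b f g (n + 1) - dyadicSum a b f g n =
      ∑ i ∈ Finset.range (2 ^ n),
        (f (dyadicPoint a b (n + 1) (2 * i + 1)) - f (dyadicPoint a b (n + 1) (2 * i))) *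
          (g (dyadicPoint a b (n + 1) (2 * i + 1 + 1)) -
            g (dyadicPoint a b (n + 1) (2 * i + 1))) := by
  rw [dyadicSum, dyadicSum, pow_succ', Finset.sum_range_two_mul_eq, ← Finset.sum_sub_distrib]
  refine Finset.sum_congr rfl fun i _ => ?_
  rw [← dyadicPoint_succ_two_mul n i, ← dyadicPoint_succ_two_mul n (i + 1),
    show 2 * (i + 1) = 2 * i + 1 + 1 by ring]
  ring

theorem abs_dyadicSum_succ_sub_le (hab : a < b) {α β A B : ℝ} (hα : 0 < α) (hβ : 0 < β)
    {f g : ℝ → ℝ} (hf : HolderBound a b α A f) (hg : HolderBound a b β B g) (n : ℕ) :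
    |dyadicSum a b f g (n + 1) - dyadicSum a b f g n| ≤
      A * B * (b - a) ^ (α + β) * ((2 : ℝ) ^ (1 - (α + β))) ^ n := by
  have hA := hf.nonneg hab
  have hB := hg.nonneg hab
  have h0 : 0 < b - a := sub_pos.2 hab
  have hstep : ∀ {γ M : ℝ} {h : ℝ → ℝ}, 0 < γ → HolderBound a b γ M h → ∀ i < 2 ^ (n + 1),
      |h (dyadicPoint a b (n + 1) (i + 1)) - h (dyadicPoint a b (n + 1) i)| ≤
        M * ((b - a) / 2 ^ n) ^ γ := by
    intro γ M h hγ hh i hi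
    refine (hh _ (dyadicPoint_mem hab.le hi) _ (dyadicPoint_mem hab.le hi.le)).trans ?_
    rw [dyadicPoint_succ_sub, abs_of_pos (by positivity)]
    have := hh.nonneg hab
    gcongr
    · norm_num
    · omega
  rw [dyadicSum_succ_sub]
  calc _ ≤ ∑ i ∈ Finset.range (2 ^ n),
        (A * ((b - a) / 2 ^ n) ^ α) * (B * ((b - a) / 2 ^ n) ^ β) := by
        refine (Finset.abs_sum_le_sum_abs _ _).trans (Finset.sum_le_sum fun i hi => ?_)
        have hi' : 2 * i + 1 < 2 ^ (n + 1) := by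
          have := Finset.mem_range.1 hi
          rw [pow_succ']; omega
        rw [abs_mul]
        exact mul_le_mul (hstep hα hf _ (by omega)) (hstep hβ hg _ hi') (abs_nonneg _)
          (by positivity)
    _ = A * B * (2 ^ n * ((b - a) / 2 ^ n) ^ (α + β)) := by
        rw [Real.rpow_add (by positivity)]
        simp only [Finset.sum_const, Finset.card_range, nsmul_eq_mul]
        push_cast; ring
    _ = _ := by
        have h2 : ((2 : ℝ) ^ (1 - (α + β))) ^ n = 2 ^ n / (2 ^ n) ^ (α + β) := by
          rw [← Real.rpow_natCast, ← Real.rpow_natCast, ← Real.rpow_mul (by norm_num),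
            ← Real.rpow_mul (by norm_num), ← Real.rpow_sub (by norm_num)]
          ring_nf
        rw [Real.div_rpow h0.le (by positivity), h2]
        ring

theorem two_rpow_one_sub_lt_one {θ : ℝ} (hθ : 1 < θ) : (2 : ℝ) ^ (1 - θ) < 1 :=
  Real.rpow_lt_one_of_one_lt_of_neg (by norm_num) (by linarith)

theorem exists_tendsto_dyadicSum (hab : a < b) {α β A B : ℝ} (hα : 0 < α) (hβ : 0 < β)
    (hαβ : 1 < α + β) {f g : ℝ → ℝ} (hf : HolderBound a b α A f) (hg : HolderBound a b β B g) :
    ∃ I, Filter.Tendsto (dyadicSum a b f g) Filter.atTop (nhds I) := by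
  refine cauchySeq_tendsto_of_complete (cauchySeq_of_le_geometric _
    (A * B * (b - a) ^ (α + β))
    (two_rpow_one_sub_lt_one hαβ) fun n => ?_)
  rw [dist_comm, Real.dist_eq]
  exact abs_dyadicSum_succ_sub_le hab hα hβ hf hg n

/-- The constant in the Young–Loève estimate. -/
noncomputable def youngConst (a b α β : ℝ) : ℝ :=
  (b - a) ^ β + (b - a) ^ (α + β) / (1 - 2 ^ (1 - (α + β)))

theorem youngConst_nonneg (hab : a < b) {α β : ℝ} (hαβ : 1 < α + β) :
    0 ≤ youngConst a b α β := by
  have h0 : 0 < b - a := sub_pos.2 hab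
  have := sub_pos.2 (two_rpow_one_sub_lt_one hαβ)
  unfold youngConst
  positivity

theorem abs_dyadicSum_le (hab : a < b) {α β A B : ℝ} (hα : 0 < α) (hβ : 0 < β)
    (hαβ : 1 < α + β) {f g : ℝ → ℝ} (hfA : ∀ x ∈ Icc a b, |f x| ≤ A)
    (hf : HolderBound a b α A f) (hg : HolderBound a b β B g) (n : ℕ) :
    |dyadicSum a b f g n| ≤ youngConst a b α β * (A * B) := by
  have hA := hf.nonneg hab
  have hB := hg.nonneg hab
  have h0 : 0 < b - a := sub_pos.2 hab
  have hr := two_rpow_one_sub_lt_one hαβ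
  have hr0 : (0 : ℝ) < 2 ^ (1 - (α + β)) := by positivity
  have hzero : |dyadicSum a b f g 0| ≤ A * (B * (b - a) ^ β) := by
    have h1 := hg b (right_mem_Icc.2 hab.le) a (left_mem_Icc.2 hab.le)
    rw [abs_of_pos h0] at h1
    have h2 := hfA a (left_mem_Icc.2 hab.le)
    simp only [dyadicSum, pow_zero, Finset.range_one, Finset.sum_singleton, dyadicPoint_zero,
      abs_mul]
    have : dyadicPoint a b 0 (0 + 1) = b := by simpa using dyadicPoint_last (a := a) (b := b) 0
    rw [this]
    gcongr
  have hsum : |dyadicSum a b f g n - dyadicSum a b f g 0| ≤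
      A * B * (b - a) ^ (α + β) / (1 - 2 ^ (1 - (α + β))) := by
    rw [← Finset.sum_range_sub]
    calc _ ≤ ∑ i ∈ Finset.range n,
          A * B * (b - a) ^ (α + β) * ((2 : ℝ) ^ (1 - (α + β))) ^ i :=
          (Finset.abs_sum_le_sum_abs _ _).trans (Finset.sum_le_sum fun i _ =>
            abs_dyadicSum_succ_sub_le hab hα hβ hf hg i)
      _ ≤ _ := by
          rw [← Finset.mul_sum, div_eq_mul_inv, ← tsum_geometric_of_lt_one hr0.le hr]
          have := (summable_geometric_of_lt_one hr0.le hr).sum_le_tsum (Finset.range n)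
            (fun i _ => by positivity)
          gcongr
  have htri : |dyadicSum a b f g n| ≤
      |dyadicSum a b f g n - dyadicSum a b f g 0| + |dyadicSum a b f g 0| := by
    simpa using abs_add_le (dyadicSum a b f g n - dyadicSum a b f g 0) (dyadicSum a b f g 0)
  calc _ ≤ _ := htri.trans (add_le_add hsum hzero)
    _ = _ := by unfold youngConst; ring

theorem abs_dyadicSum_sub_le (hab : a < b) {α β M₁ Mg Mft M₂ : ℝ} (hα : 0 < α) (hβ : 0 < β)
    (hαβ : 1 < α + β) {f g ft gt : ℝ → ℝ} (hsup : ∀ x ∈ Icc a b, |f x - ft x| ≤ M₁)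
    (hsub : HolderBound a b α M₁ fun x => f x - ft x) (hg : HolderBound a b β Mg g)
    (hftsup : ∀ x ∈ Icc a b, |ft x| ≤ Mft) (hft : HolderBound a b α Mft ft)
    (hgsub : HolderBound a b β M₂ fun x => g x - gt x) (n : ℕ) :
    |dyadicSum a b f g n - dyadicSum a b ft gt n| ≤
      youngConst a b α β * (M₁ * Mg + Mft * M₂) := by
  have hsplit : dyadicSum a b f g n - dyadicSum a b ft gt n =
      dyadicSum a b (fun x => f x - ft x) g n + dyadicSum a b ft (fun x => g x - gt x) n := by
    simp only [dyadicSum, ← Finset.sum_sub_distrib, ← Finset.sum_add_distrib]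
    exact Finset.sum_congr rfl fun i _ => by ring
  rw [hsplit, mul_add]
  exact (abs_add_le _ _).trans (add_le_add (abs_dyadicSum_le hab hα hβ hαβ hsup hsub hg n)
    (abs_dyadicSum_le hab hα hβ hαβ hftsup hft hgsub n))

end Dyadic

theorem abs_integral_mul_deriv_sub_le {a b u v : ℝ} {f g : ℝ → ℝ} {L K : NNReal}
    (hf : LipschitzOnWith L f (Icc a b)) (hg : LipschitzOnWith K g (Icc a b))
    (hau : a ≤ u) (huv : u ≤ v) (hvb : v ≤ b) :
    |(∫ x in u..v, f x * deriv g x) - f u * (g v - g u)| ≤ L * K * (v - u) ^ 2 := by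
  have hsub : uIcc u v ⊆ Icc a b := by
    rw [uIcc_of_le huv]; exact Icc_subset_Icc hau hvb
  have hgac := (hg.mono hsub).absolutelyContinuousOnInterval
  have hgint := hgac.intervalIntegrable_deriv
  have hfc := (hf.mono hsub).continuousOn
  rw [← hgac.integral_deriv_eq_sub, ← intervalIntegral.integral_const_mul,
    ← intervalIntegral.integral_sub (hgint.continuousOn_mul hfc) (hgint.const_mul _)]
  have hbound : ∀ᵐ x : ℝ, x ∈ uIoc u v →
      ‖f x * deriv g x - f u * deriv g x‖ ≤ L * (v - u) * K := by
    filter_upwards [MeasureTheory.Measure.ae_ne MeasureTheory.volume v] with x hxv hx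
    rw [uIoc_of_le huv] at hx
    have hxv' : x < v := lt_of_le_of_ne hx.2 hxv
    have hd : ‖deriv g x‖ ≤ K :=
      norm_deriv_le_of_lipschitzOn (Icc_mem_nhds (hau.trans_lt hx.1) (hxv'.trans_le hvb)) hg
    have hfx : ‖f x - f u‖ ≤ L * (v - u) := by
      have h1 := lipschitzOnWith_iff_dist_le_mul.1 hf x
        (hsub (by rw [uIcc_of_le huv]; exact ⟨hx.1.le, hx.2⟩)) u (hsub left_mem_uIcc)
      rw [dist_eq_norm, Real.dist_eq, abs_of_pos (sub_pos.2 hx.1)] at h1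
      refine h1.trans ?_
      have := hx.2
      gcongr
    rw [← sub_mul, norm_mul]
    exact mul_le_mul hfx hd (norm_nonneg _)
      (mul_nonneg L.coe_nonneg (sub_nonneg.2 huv))
  have := intervalIntegral.norm_integral_le_of_norm_le_const_ae hbound
  rw [abs_of_nonneg (sub_nonneg.2 huv)] at this
  exact this.trans_eq (by ring)

theorem tendsto_dyadicSum_of_lipOn {a b : ℝ} (hab : a < b) {f g : ℝ → ℝ} (hf : LipOn a b f)
    (hg : LipOn a b g) :
    Filter.Tendsto (dyadicSum a b f g) Filter.atTop (nhds (∫ x in a..b, f x * deriv g x)) := by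
  obtain ⟨L, hL⟩ := hf
  obtain ⟨K, hK⟩ := hg
  have h0 : 0 < b - a := sub_pos.2 hab
  have hint : IntervalIntegrable (fun x => f x * deriv g x) MeasureTheory.volume a b := by
    rw [← uIcc_of_le hab.le] at hL hK
    exact hK.absolutelyContinuousOnInterval.intervalIntegrable_deriv.continuousOn_mul
      hL.continuousOn
  rw [tendsto_iff_dist_tendsto_zero]
  have hlim : Filter.Tendsto (fun n : ℕ => L * K * (b - a) ^ 2 * (1 / 2 : ℝ) ^ n) Filter.atTop
      (nhds 0) := by
    simpa using (tendsto_pow_atTop_nhds_zero_of_lt_one (r := (1 / 2 : ℝ)) (by norm_num)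
      (by norm_num)).const_mul (L * K * (b - a) ^ 2 : ℝ)
  refine squeeze_zero (fun _ => dist_nonneg) (fun n => ?_) hlim
  have hle : ∀ i, dyadicPoint a b n i ≤ dyadicPoint a b n (i + 1) := fun i => by
    have := dyadicPoint_succ_sub (a := a) (b := b) n i
    have : 0 < (b - a) / 2 ^ n := by positivity
    linarith
  have hsum : ∑ i ∈ Finset.range (2 ^ n),
      ∫ x in dyadicPoint a b n i..dyadicPoint a b n (i + 1), f x * deriv g x =
        ∫ x in a..b, f x * deriv g x := by
    rw [intervalIntegral.sum_integral_adjacent_intervals (a := dyadicPoint a b n),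
      dyadicPoint_zero, dyadicPoint_last]
    intro i hi
    refine hint.mono_set ?_
    rw [uIcc_of_le (hle i), uIcc_of_le hab.le]
    exact Icc_subset_Icc (dyadicPoint_mem hab.le hi.le).1 (dyadicPoint_mem hab.le hi).2
  rw [dist_comm, Real.dist_eq, ← hsum, dyadicSum, ← Finset.sum_sub_distrib]
  calc _ ≤ ∑ i ∈ Finset.range (2 ^ n), L * K * ((b - a) / 2 ^ n) ^ 2 := by
        refine (Finset.abs_sum_le_sum_abs _ _).trans (Finset.sum_le_sum fun i hi => ?_)
        have hi' := Finset.mem_range.1 hi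
        rw [← dyadicPoint_succ_sub n i]
        exact abs_integral_mul_deriv_sub_le hL hK (dyadicPoint_mem hab.le hi'.le).1 (hle i)
          (dyadicPoint_mem hab.le hi').2
    _ = _ := by
        simp only [Finset.sum_const, Finset.card_range, nsmul_eq_mul]
        push_cast
        rw [one_div, inv_pow]
        field_simp

theorem isYoungIntegral_of_tendsto_dyadicSum {a b α β A B I : ℝ} (hab : a < b)
    {f g : ℝ → ℝ} (hf : HolderBound a b α A f) (hg : HolderBound a b β B g)
    (hI : Filter.Tendsto (dyadicSum a b f g) Filter.atTop (nhds I)) :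
    IsYoungIntegral a b α β f g I := by
  intro α' β' hα' hα'α hβ' hβ'β hαβ' fk gk hfk hgk hcf hcg
  have hf' := hf.mono_exponent hab hα' hα'α
  have hg' := hg.mono_exponent hab hβ' hβ'β
  have hfsup := hf'.abs_le hab hα'.le
  set A' := A * (b - a) ^ (α - α')
  set B' := B * (b - a) ^ (β - β')
  have hB' : 0 ≤ B' := hg'.nonneg hab
  set M := max A' (|f a| + A' * (b - a) ^ α')
  have hM : 0 ≤ M := (hf'.nonneg hab).trans (le_max_left _ _)
  have hY := youngConst_nonneg hab hαβ'
  set Y := youngConst a b α' β'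
  rw [Metric.tendsto_atTop]
  intro ε hε
  set δ := min 1 (ε / (Y * (B' + 1 + M) + 1))
  have hden : 0 < Y * (B' + 1 + M) + 1 := by positivity
  have hδ : 0 < δ := lt_min one_pos (by positivity)
  obtain ⟨N₁, hN₁⟩ := hcf δ hδ
  obtain ⟨N₂, hN₂⟩ := hcg δ hδ
  refine ⟨max N₁ N₂, fun k hk => ?_⟩
  obtain ⟨hs, hh⟩ := hN₁ k ((le_max_left _ _).trans hk)
  obtain ⟨-, hh₂⟩ := hN₂ k ((le_max_right _ _).trans hk)
  have hgkH : HolderBound a b β' (B' + δ) (gk k) := fun x hx y hy => by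
    have h1 := hh₂ x hx y hy
    have h2 := hg' x hx y hy
    have h3 := abs_add_le ((gk k x - g x) - (gk k y - g y)) (g x - g y)
    rw [show (gk k x - g x) - (gk k y - g y) + (g x - g y) = gk k x - gk k y by ring] at h3
    linarith
  have hle : |(∫ x in a..b, fk k x * deriv (gk k) x) - I| ≤ Y * (δ * (B' + δ) + M * δ) := by
    refine le_of_tendsto ((tendsto_dyadicSum_of_lipOn hab (hfk k) (hgk k)).sub hI).abs
      (Filter.Eventually.of_forall fun n => ?_)
    exact abs_dyadicSum_sub_le hab hα' hβ' hαβ' hs hh hgkH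
      (fun x hx => (hfsup x hx).trans (le_max_right _ _)) (hf'.mono_const (le_max_left _ _)) hh₂ n
  rw [Real.dist_eq]
  have hδ1 : δ ≤ 1 := min_le_left _ _
  have hδε : δ * (Y * (B' + 1 + M) + 1) ≤ ε := (le_div_iff₀ hden).1 (min_le_right _ _)
  calc _ ≤ _ := hle
    _ ≤ Y * (δ * (B' + 1) + M * δ) := by gcongr
    _ < δ * (Y * (B' + 1 + M) + 1) := by linarith
    _ ≤ ε := hδε

/-- A Hölder function on `[a,b]` extends to the real line with the same constant. -/
theorem HolderBound.exists_extension {a b γ M : ℝ} {h : ℝ → ℝ} (hh : HolderBound a b γ M h)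
    (hab : a < b) (hγ : 0 < γ) :
    ∃ H : ℝ → ℝ, (∀ x ∈ Icc a b, H x = h x) ∧ ∀ x y, |H x - H y| ≤ M * |x - y| ^ γ := by
  refine ⟨fun x => h (projIcc a b hab.le x), fun x hx => by simp only [projIcc_of_mem hab.le hx],
    fun x y => (hh _ (projIcc a b hab.le x).2 _ (projIcc a b hab.le y).2).trans ?_⟩
  have := abs_projIcc_sub_projIcc (a := a) (b := b) (c := y) (d := x) hab.le
  rw [abs_sub_comm, abs_sub_comm y] at this
  exact mul_le_mul_of_nonneg_left (Real.rpow_le_rpow (abs_nonneg _) this hγ.le) (hh.nonneg hab)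

/-- Forward averages of a globally Hölder function are Lipschitz, keep the Hölder constant and
are uniformly close to the function. -/
theorem exists_lipschitz_smoothing {γ M h : ℝ} (hγ : 0 < γ) (hM : 0 ≤ M) (hh : 0 < h)
    {H : ℝ → ℝ} (hH : ∀ x y, |H x - H y| ≤ M * |x - y| ^ γ) :
    ∃ F : ℝ → ℝ, (∃ L : NNReal, LipschitzWith L F) ∧
      (∀ x y, |F x - F y| ≤ M * |x - y| ^ γ) ∧ ∀ x, |F x - H x| ≤ M * h ^ γ := by
  have hcont : Continuous H := by
    rw [continuous_iff_continuousAt]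
    intro x
    rw [ContinuousAt, tendsto_iff_dist_tendsto_zero]
    have hlim : Filter.Tendsto (fun y => M * |y - x| ^ γ) (nhds x) (nhds 0) := by
      have : Continuous fun y => M * |y - x| ^ γ := by
        have := Real.continuous_rpow_const hγ.le
        fun_prop
      simpa [hγ.ne'] using this.tendsto x
    exact squeeze_zero (fun _ => dist_nonneg) (fun y => hH y x) hlim
  have hii : ∀ u v, IntervalIntegrable H MeasureTheory.volume u v := fun u v =>
    hcont.intervalIntegrable u v
  have hii' : ∀ x, IntervalIntegrable (fun t => H (x + t)) MeasureTheory.volume 0 h := fun x =>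
    (hcont.comp (continuous_const_add x)).intervalIntegrable 0 h
  have habs : ∀ {C J : ℝ}, ‖J‖ ≤ C * |h - 0| → |h⁻¹ * J| ≤ C := by
    intro C J hJ
    rw [Real.norm_eq_abs, sub_zero, abs_of_pos hh] at hJ
    rw [abs_mul, abs_of_pos (inv_pos.2 hh), inv_mul_le_iff₀ hh]
    linarith
  refine ⟨fun x => h⁻¹ * ∫ t in (0 : ℝ)..h, H (x + t), ?_, fun x y => ?_, fun x => ?_⟩
  · have hderiv : ∀ x, HasDerivAt (fun x => h⁻¹ * ∫ t in (0 : ℝ)..h, H (x + t))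
        (h⁻¹ * (H (x + h) - H x)) x := by
      intro x
      have hprim : ∀ y, HasDerivAt (fun y => ∫ t in (0 : ℝ)..y, H t) (H y) y := fun y =>
        intervalIntegral.integral_hasDerivAt_right (hii 0 y)
          (hcont.stronglyMeasurableAtFilter _ _) hcont.continuousAt
      have hfun : (fun x => h⁻¹ * ∫ t in (0 : ℝ)..h, H (x + t)) =
          fun x => h⁻¹ * ((∫ t in (0 : ℝ)..(x + h), H t) - ∫ t in (0 : ℝ)..x, H t) := by
        funext y
        rw [intervalIntegral.integral_comp_add_left, add_zero,
          intervalIntegral.integral_interval_sub_left (hii _ _) (hii _ _)]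
      rw [hfun]
      exact (((hprim (x + h)).comp_add_const x h).sub (hprim x)).const_mul _
    refine ⟨(h⁻¹ * (M * h ^ γ)).toNNReal, lipschitzWith_of_nnnorm_deriv_le
      (fun x => (hderiv x).differentiableAt) fun x => ?_⟩
    rw [(hderiv x).deriv, ← NNReal.coe_le_coe]
    rw [coe_nnnorm, Real.coe_toNNReal _ (by positivity), norm_mul, Real.norm_eq_abs,
      Real.norm_eq_abs, abs_of_pos (inv_pos.2 hh)]
    have h1 := hH (x + h) x
    rw [add_sub_cancel_left, abs_of_pos hh] at h1
    gcongr
  · beta_reduce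
    rw [← mul_sub, ← intervalIntegral.integral_sub (hii' x) (hii' y)]
    refine habs (intervalIntegral.norm_integral_le_of_norm_le_const fun t _ => ?_)
    simpa using hH (x + t) (y + t)
  · have hx : H x = h⁻¹ * ∫ _ in (0 : ℝ)..h, H x := by
      rw [intervalIntegral.integral_const]; simp [hh.ne']
    beta_reduce
    rw [hx, ← mul_sub, ← intervalIntegral.integral_sub (hii' x) (by simp)]
    refine habs (intervalIntegral.norm_integral_le_of_norm_le_const fun t ht => ?_)
    rw [uIoc_of_le hh.le] at ht
    have h1 := hH (x + t) x
    rw [add_sub_cancel_left, abs_of_pos ht.1] at h1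
    refine h1.trans ?_
    have h2 := Real.rpow_le_rpow ht.1.le ht.2 hγ.le
    gcongr

theorem exists_lipOn_convH {a b γ ε M : ℝ} (hab : a < b) (hε : 0 < ε) (hεγ : ε < γ)
    {f : ℝ → ℝ} (hf : HolderBound a b γ M f) :
    ∃ fk : ℕ → ℝ → ℝ, (∀ k, LipOn a b (fk k)) ∧ ConvH (γ - ε) a b fk f := by
  have hγ : 0 < γ := hε.trans hεγ
  have hM := hf.nonneg hab
  obtain ⟨H, hHf, hH⟩ := hf.exists_extension hab hγ
  have hpos : ∀ k : ℕ, (0 : ℝ) < 1 / (k + 1) := fun k => Nat.one_div_pos_of_nat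
  choose F hFL hFH hFd using fun k : ℕ => exists_lipschitz_smoothing hγ hM (hpos k) hH
  refine ⟨F, fun k => (hFL k).imp fun L hL => hL.lipschitzOnWith, fun δ hδ => ?_⟩
  have hlim : Filter.Tendsto (fun k : ℕ => 2 * M * (1 / ((k : ℝ) + 1)) ^ ε) Filter.atTop
      (nhds 0) := by
    have h1 := (tendsto_one_div_add_atTop_nhds_zero_nat (𝕜 := ℝ)).rpow_const
      (p := ε) (Or.inr hε.le)
    simpa [Real.zero_rpow hε.ne'] using h1.const_mul (2 * M)
  obtain ⟨N, hN⟩ := Filter.eventually_atTop.1 (hlim.eventually (Iio_mem_nhds hδ))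
  refine ⟨N, fun k hk => ?_⟩
  have hNk : 2 * M * (1 / ((k : ℝ) + 1)) ^ ε ≤ δ := le_of_lt (hN k hk)
  have hFd' := hFd k
  have hFH' := hFH k
  have hr := hpos k
  have hr1 : 1 / ((k : ℝ) + 1) ≤ 1 := by
    rw [div_le_one (by positivity)]; linarith [Nat.cast_nonneg (α := ℝ) k]
  set r : ℝ := 1 / ((k : ℝ) + 1)
  have hsplit : ∀ d : ℝ, 0 ≤ d → d ^ γ = d ^ ε * d ^ (γ - ε) := fun d hd => by
    rw [← Real.rpow_add_of_nonneg hd hε.le (by linarith), add_sub_cancel]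
  constructor
  · intro x hx
    rw [← hHf x hx]
    have h1 : r ^ γ ≤ r ^ ε := Real.rpow_le_rpow_of_exponent_ge hr hr1 hεγ.le
    have h2 := mul_le_mul_of_nonneg_left h1 hM
    have h3 : 0 ≤ M * r ^ ε := by positivity
    linarith [hFd' x]
  · intro x hx y hy
    rw [← hHf x hx, ← hHf y hy]
    have hmain : |(F k x - H x) - (F k y - H y)| ≤ 2 * M * r ^ ε * |x - y| ^ (γ - ε) := by
      rcases le_total |x - y| r with hd | hd
      · have h1 := abs_sub (F k x - F k y) (H x - H y)
        rw [show (F k x - F k y) - (H x - H y) = (F k x - H x) - (F k y - H y) by ring] at h1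
        have h2 : |x - y| ^ γ ≤ r ^ ε * |x - y| ^ (γ - ε) := by
          rw [hsplit _ (abs_nonneg _)]
          gcongr
        have h3 := mul_le_mul_of_nonneg_left h2 hM
        linarith [hFH' x y, hH x y]
      · have h1 := abs_sub (F k x - H x) (F k y - H y)
        have h2 : r ^ γ ≤ r ^ ε * |x - y| ^ (γ - ε) := by
          rw [hsplit _ hr.le]
          have : 0 ≤ γ - ε := by linarith
          gcongr
        have h3 := mul_le_mul_of_nonneg_left h2 hM
        linarith [hFd' x, hFd' y]
    exact hmain.trans (by gcongr)

theorem IsYoungIntegral.unique {a b α β A B I J : ℝ} (hab : a < b) (hα0 : 0 < α) (hα1 : α ≤ 1)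
    (hβ0 : 0 < β) (hβ1 : β ≤ 1) (hαβ : 1 < α + β) {f g : ℝ → ℝ} (hf : HolderBound a b α A f)
    (hg : HolderBound a b β B g) (hI : IsYoungIntegral a b α β f g I)
    (hJ : IsYoungIntegral a b α β f g J) : I = J := by
  have hε : 0 < (α + β - 1) / 3 := by linarith
  obtain ⟨fk, hfk, hcf⟩ := exists_lipOn_convH hab hε (by linarith) hf
  obtain ⟨gk, hgk, hcg⟩ := exists_lipOn_convH hab hε (by linarith) hg
  exact tendsto_nhds_unique
    (hI _ _ (by linarith) (by linarith) (by linarith) (by linarith) (by linarith) fk gk hfk hgk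
      hcf hcg)
    (hJ _ _ (by linarith) (by linarith) (by linarith) (by linarith) (by linarith) fk gk hfk hgk
      hcf hcg)

/-- Proposition 3.11 of the paper, after Young.  For
`f ∈ C^{0,α}([a,b])`, `g ∈ C^{0,β}([a,b])` with `α + β > 1`, the Young integral
`∫_a^b f dg` exists (as the common limit of `∫_a^b f_k g_k'` over all Lipschitz
approximations in `C^{0,α'}`, `C^{0,β'}`, for any admissible `α' ≤ α`, `β' ≤ β`),
and it satisfies the stability estimate
`|∫ f dg - ∫ f̃ dg̃| ≤ C (‖f-f̃‖_{C^{0,α}} [g]_β + ‖f̃‖_{C^{0,α}} [g-g̃]_β)`. -/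
theorem stmt11 (a b : ℝ) (hab : a < b) (α β α' β' : ℝ)
    (hα0 : 0 < α) (hα1 : α ≤ 1) (hβ0 : 0 < β) (hβ1 : β ≤ 1) (hαβ : 1 < α + β)
    (hα'0 : 0 < α') (hα'α : α' ≤ α) (hβ'0 : 0 < β') (hβ'β : β' ≤ β) (hα'β' : 1 < α' + β') :
    (∀ f g : ℝ → ℝ,
      (∃ Cf : ℝ, ∀ x ∈ Icc a b, ∀ y ∈ Icc a b, |f x - f y| ≤ Cf * |x - y| ^ α) →
      (∃ Cg : ℝ, ∀ x ∈ Icc a b, ∀ y ∈ Icc a b, |g x - g y| ≤ Cg * |x - y| ^ β) →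
      ∃ I : ℝ, IsYoungIntegral a b α β f g I) ∧
    (∃ C : ℝ, ∀ f g ft gt : ℝ → ℝ, ∀ I It : ℝ,
      (∃ Cf : ℝ, ∀ x ∈ Icc a b, ∀ y ∈ Icc a b, |f x - f y| ≤ Cf * |x - y| ^ α) →
      (∃ Cg : ℝ, ∀ x ∈ Icc a b, ∀ y ∈ Icc a b, |g x - g y| ≤ Cg * |x - y| ^ β) →
      (∃ Cf : ℝ, ∀ x ∈ Icc a b, ∀ y ∈ Icc a b, |ft x - ft y| ≤ Cf * |x - y| ^ α) →
      (∃ Cg : ℝ, ∀ x ∈ Icc a b, ∀ y ∈ Icc a b, |gt x - gt y| ≤ Cg * |x - y| ^ β) →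
      IsYoungIntegral a b α β f g I → IsYoungIntegral a b α β ft gt It →
      ∀ M₁ Mg Mft M₂ : ℝ,
        (∀ x ∈ Icc a b, |f x - ft x| ≤ M₁) →
        (∀ x ∈ Icc a b, ∀ y ∈ Icc a b,
          |(f x - ft x) - (f y - ft y)| ≤ M₁ * |x - y| ^ α) →
        (∀ x ∈ Icc a b, ∀ y ∈ Icc a b, |g x - g y| ≤ Mg * |x - y| ^ β) →
        (∀ x ∈ Icc a b, |ft x| ≤ Mft) →
        (∀ x ∈ Icc a b, ∀ y ∈ Icc a b, |ft x - ft y| ≤ Mft * |x - y| ^ α) →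
        (∀ x ∈ Icc a b, ∀ y ∈ Icc a b,
          |(g x - gt x) - (g y - gt y)| ≤ M₂ * |x - y| ^ β) →
        |I - It| ≤ C * (M₁ * Mg + Mft * M₂)) := by
  refine ⟨fun f g ⟨A, hf⟩ ⟨B, hg⟩ => ?_, youngConst a b α β, ?_⟩
  · obtain ⟨I, hI⟩ := exists_tendsto_dyadicSum hab hα0 hβ0 hαβ hf hg
    exact ⟨I, isYoungIntegral_of_tendsto_dyadicSum hab hf hg hI⟩
  · intro f g ft gt I It ⟨A, hf⟩ ⟨B, hg⟩ ⟨At, hft⟩ ⟨Bt, hgt⟩ hI hIt M₁ Mg Mft M₂ hsup hsub hgM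
      hftsup hftM hgsub
    obtain ⟨J, hJ⟩ := exists_tendsto_dyadicSum hab hα0 hβ0 hαβ hf hg
    obtain ⟨Jt, hJt⟩ := exists_tendsto_dyadicSum hab hα0 hβ0 hαβ hft hgt
    obtain rfl := hI.unique hab hα0 hα1 hβ0 hβ1 hαβ hf hg
      (isYoungIntegral_of_tendsto_dyadicSum hab hf hg hJ)
    obtain rfl := hIt.unique hab hα0 hα1 hβ0 hβ1 hαβ hft hgt
      (isYoungIntegral_of_tendsto_dyadicSum hab hft hgt hJt)
    exact le_of_tendsto (hJ.sub hJt).abs (Filter.Eventually.of_forall fun n =>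
      abs_dyadicSum_sub_le hab hα0 hβ0 hαβ hsup hsub hgM hftsup hftM hgsub n)
end

section
/- Let V = ℝ^{2n} with coordinates (x_1, y_1, …, x_n, y_n), let dx_1, dy_1, …, dx_n, dy_n denote the dual basis of V*, and let ω = ∑_{i=1}^n dx_i ∧ dy_i ∈ ⋀^2 V*. For each integer 1 ≤ k ≤ n, the Lefschetz operator L^k : ⋀^{n−k} V* → ⋀^{n+k} V*, defined by L^k(ξ) = ξ ∧ ω^k (where ω^k denotes the k-fold wedge power ω ∧ ⋯ ∧ ω), is a linear isomorphism. -/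
set_option synthInstance.maxHeartbeats 1000000
set_option maxHeartbeats 1000000

/-- The `k`-th exterior power `⋀^k M`, realized as the `k`-th power of the image of `M`
inside the exterior algebra of `M`. -/
noncomputable def extPow (k : ℕ) (M : Type*) [AddCommGroup M] [Module ℝ M] :
    Submodule ℝ (ExteriorAlgebra ℝ M) :=
  (LinearMap.range (ExteriorAlgebra.ι ℝ : M →ₗ[ℝ] ExteriorAlgebra ℝ M)) ^ k

/-- The standard symplectic form `ω = ∑ dx_i ∧ dy_i ∈ ⋀² (ℝ^{2n})^*`, where
`dx_i = proj (2i)` and `dy_i = proj (2i+1)` form the dual basis of `(ℝ^{2n})^*`. -/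
noncomputable def symplForm (n : ℕ) :
    ExteriorAlgebra ℝ (Module.Dual ℝ (Fin (2*n) → ℝ)) :=
  ∑ j : Fin n,
    ExteriorAlgebra.ι ℝ
        (LinearMap.proj (⟨2*j.1, by have := j.2; omega⟩ : Fin (2*n)) :
          Module.Dual ℝ (Fin (2*n) → ℝ)) *
      ExteriorAlgebra.ι ℝ
        (LinearMap.proj (⟨2*j.1+1, by have := j.2; omega⟩ : Fin (2*n)) :
          Module.Dual ℝ (Fin (2*n) → ℝ))

/-- A Darboux frame of `M`: vectors `a j`, `b j` together with coordinate functionals `A j`, `B j`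
with respect to which `a`, `b` form a basis. -/
structure DarbouxFrame (J M : Type*) [Fintype J] [DecidableEq J] [AddCommGroup M] [Module ℝ M] where
  a : J → M
  b : J → M
  A : J → Module.Dual ℝ M
  B : J → Module.Dual ℝ M
  A_a : ∀ j l, A j (a l) = if j = l then 1 else 0
  A_b : ∀ j l, A j (b l) = 0
  B_a : ∀ j l, B j (a l) = 0
  B_b : ∀ j l, B j (b l) = if j = l then 1 else 0
  sum_coord : ∀ v, ∑ j, (A j v • a j + B j v • b j) = v

section ExteriorContraction

variable {M : Type*} [AddCommGroup M] [Module ℝ M]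

/-- Interior product of a covector with an element of the exterior algebra. -/
noncomputable def interiorProd (d : Module.Dual ℝ M) :
    ExteriorAlgebra ℝ M →ₗ[ℝ] ExteriorAlgebra ℝ M :=
  CliffordAlgebra.contractLeft (Q := (0 : QuadraticForm ℝ M)) d

theorem interiorProd_ι_mul (d : Module.Dual ℝ M) (v : M) (x : ExteriorAlgebra ℝ M) :
    interiorProd d (ExteriorAlgebra.ι ℝ v * x) =
      d v • x - ExteriorAlgebra.ι ℝ v * interiorProd d x :=
  CliffordAlgebra.contractLeft_ι_mul d v x

theorem interiorProd_algebraMap (d : Module.Dual ℝ M) (r : ℝ) :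
    interiorProd d (algebraMap ℝ (ExteriorAlgebra ℝ M) r) = 0 :=
  CliffordAlgebra.contractLeft_algebraMap (0 : QuadraticForm ℝ M) d r

theorem mul_mem_extPow {i j : ℕ} {x y : ExteriorAlgebra ℝ M} (hx : x ∈ extPow i M)
    (hy : y ∈ extPow j M) : x * y ∈ extPow (i + j) M := by
  rw [extPow, pow_add]
  exact Submodule.mul_mem_mul hx hy

theorem ι_mem_extPow_one (v : M) : ExteriorAlgebra.ι ℝ v ∈ extPow 1 M := by
  rw [extPow, pow_one]
  exact LinearMap.mem_range_self _ v

/-- The interior product lowers the degree by one, and vanishes in degree zero. -/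
theorem interiorProd_extPow (d : Module.Dual ℝ M) {m : ℕ} {x : ExteriorAlgebra ℝ M}
    (hx : x ∈ extPow m M) : (m = 0 → interiorProd d x = 0) ∧ interiorProd d x ∈ extPow (m - 1) M := by
  unfold extPow at hx
  induction hx using Submodule.pow_induction_on_left' with
  | algebraMap r => simp [interiorProd_algebraMap]
  | add x y i hx hy ihx ihy =>
    refine ⟨fun h => ?_, ?_⟩
    · rw [map_add, ihx.1 h, ihy.1 h, add_zero]
    · rw [map_add]
      exact add_mem ihx.2 ihy.2
  | mem_mul v hv i x hx ih =>
    obtain ⟨v, rfl⟩ := hv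
    refine ⟨fun h => absurd h (Nat.succ_ne_zero i), ?_⟩
    rw [interiorProd_ι_mul]
    refine sub_mem (Submodule.smul_mem _ _ hx) ?_
    rcases Nat.eq_zero_or_pos i with hi | hi
    · rw [ih.1 hi, mul_zero]
      exact zero_mem _
    · have := mul_mem_extPow (ι_mem_extPow_one v) ih.2
      rwa [show 1 + (i - 1) = i.succ - 1 by omega] at this

theorem commute_ι_mul_ι (u v : M) (x : ExteriorAlgebra ℝ M) :
    Commute (ExteriorAlgebra.ι ℝ u * ExteriorAlgebra.ι ℝ v) x := by
  induction x using ExteriorAlgebra.induction with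
  | algebraMap r => exact (Algebra.commutes r _).symm
  | ι w =>
    have swap (s t : M) : ExteriorAlgebra.ι ℝ s * ExteriorAlgebra.ι ℝ t =
        -(ExteriorAlgebra.ι ℝ t * ExteriorAlgebra.ι ℝ s) :=
      eq_neg_of_add_eq_zero_left (ExteriorAlgebra.ι_add_mul_swap s t)
    rw [Commute, SemiconjBy, mul_assoc, swap v w, mul_neg, ← mul_assoc, swap u w, neg_mul, neg_neg,
      mul_assoc]
  | mul x y hx hy => exact hx.mul_right hy
  | add x y hx hy => exact hx.add_right hy

end ExteriorContraction

namespace DarbouxFrame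

variable {J M : Type*} [Fintype J] [DecidableEq J] [AddCommGroup M] [Module ℝ M]
  (F : DarbouxFrame J M)

/-- The symplectic form `∑ a j ∧ b j` of a Darboux frame. -/
noncomputable def form : ExteriorAlgebra ℝ M :=
  ∑ j, ExteriorAlgebra.ι ℝ (F.a j) * ExteriorAlgebra.ι ℝ (F.b j)

/-- The dual Lefschetz operator of a Darboux frame. -/
noncomputable def dualLefschetz : ExteriorAlgebra ℝ M →ₗ[ℝ] ExteriorAlgebra ℝ M :=
  ∑ j, interiorProd (F.B j) ∘ₗ interiorProd (F.A j)

theorem dualLefschetz_apply (x : ExteriorAlgebra ℝ M) :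
    F.dualLefschetz x = ∑ j, interiorProd (F.B j) (interiorProd (F.A j) x) := by
  simp [dualLefschetz]

theorem commute_form (x : ExteriorAlgebra ℝ M) : Commute F.form x :=
  Commute.sum_left _ _ _ fun _ _ => commute_ι_mul_ι _ _ _

theorem form_mem : F.form ∈ extPow 2 M :=
  sum_mem fun _ _ => mul_mem_extPow (ι_mem_extPow_one _) (ι_mem_extPow_one _)

theorem form_pow_mul_mem {m : ℕ} {x : ExteriorAlgebra ℝ M} (hx : x ∈ extPow m M) (r : ℕ) :
    F.form ^ r * x ∈ extPow (m + 2 * r) M := by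
  induction r with
  | zero => simpa using hx
  | succ r ih =>
    have := mul_mem_extPow F.form_mem ih
    rw [pow_succ', mul_assoc]
    rwa [show m + 2 * (r + 1) = 2 + (m + 2 * r) by ring]

theorem dualLefschetz_mem {m : ℕ} {x : ExteriorAlgebra ℝ M} (hx : x ∈ extPow m M) :
    F.dualLefschetz x ∈ extPow (m - 2) M := by
  rw [dualLefschetz_apply]
  exact sum_mem fun j _ => (interiorProd_extPow _ (interiorProd_extPow _ hx).2).2

theorem dualLefschetz_eq_zero {m : ℕ} (hm : m < 2) {x : ExteriorAlgebra ℝ M}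
    (hx : x ∈ extPow m M) : F.dualLefschetz x = 0 := by
  rw [dualLefschetz_apply]
  exact Finset.sum_eq_zero fun j _ =>
    (interiorProd_extPow _ (interiorProd_extPow _ hx).2).1 (by omega)

/-- Euler's identity: the number operator acts on degree `m` as multiplication by `m`. -/
theorem euler {m : ℕ} {x : ExteriorAlgebra ℝ M} (hx : x ∈ extPow m M) :
    ∑ j, (ExteriorAlgebra.ι ℝ (F.a j) * interiorProd (F.A j) x +
      ExteriorAlgebra.ι ℝ (F.b j) * interiorProd (F.B j) x) = (m : ℝ) • x := by
  unfold extPow at hx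
  induction hx using Submodule.pow_induction_on_left' with
  | algebraMap r => simp [interiorProd_algebraMap]
  | add x y i hx hy ihx ihy =>
    rw [smul_add, ← ihx, ← ihy, ← Finset.sum_add_distrib]
    refine Finset.sum_congr rfl fun j _ => ?_
    simp only [map_add, mul_add]
    abel
  | mem_mul v hv i x hx ih =>
    obtain ⟨v, rfl⟩ := hv
    have swap (s : M) (y : ExteriorAlgebra ℝ M) :
        ExteriorAlgebra.ι ℝ s * (ExteriorAlgebra.ι ℝ v * y) =
          -(ExteriorAlgebra.ι ℝ v * (ExteriorAlgebra.ι ℝ s * y)) := by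
      rw [← mul_assoc, ← mul_assoc,
        eq_neg_of_add_eq_zero_left (ExteriorAlgebra.ι_add_mul_swap s v), neg_mul]
    have hv : ExteriorAlgebra.ι ℝ v * x =
        ∑ j, (F.A j v • (ExteriorAlgebra.ι ℝ (F.a j) * x) +
          F.B j v • (ExteriorAlgebra.ι ℝ (F.b j) * x)) := by
      conv_lhs => rw [← F.sum_coord v]
      simp [Finset.sum_mul, add_mul]
    rw [Nat.cast_succ, add_smul, one_smul, ← mul_smul_comm, ← ih, Finset.mul_sum]
    nth_rewrite 3 [hv]
    rw [← Finset.sum_add_distrib]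
    refine Finset.sum_congr rfl fun j _ => ?_
    simp only [interiorProd_ι_mul, mul_sub, swap, mul_add, mul_smul_comm]
    abel

/-- The `sl₂` commutation relation. -/
theorem dualLefschetz_form_mul {m : ℕ} {x : ExteriorAlgebra ℝ M} (hx : x ∈ extPow m M) :
    F.dualLefschetz (F.form * x) =
      F.form * F.dualLefschetz x + ((Fintype.card J : ℝ) - m) • x := by
  have term (j l : J) : interiorProd (F.B l) (interiorProd (F.A l)
        (ExteriorAlgebra.ι ℝ (F.a j) * ExteriorAlgebra.ι ℝ (F.b j) * x)) =
      ExteriorAlgebra.ι ℝ (F.a j) * ExteriorAlgebra.ι ℝ (F.b j) *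
        interiorProd (F.B l) (interiorProd (F.A l) x) +
      if l = j then x - (ExteriorAlgebra.ι ℝ (F.a j) * interiorProd (F.A j) x +
        ExteriorAlgebra.ι ℝ (F.b j) * interiorProd (F.B j) x) else 0 := by
    simp only [mul_assoc, interiorProd_ι_mul, map_sub, map_smul, F.A_a, F.A_b, F.B_a, F.B_b]
    split_ifs with h
    · subst h
      simp only [one_smul, zero_smul, mul_sub, mul_zero]
      abel
    · simp
  rw [sub_smul, ← F.euler hx, dualLefschetz_apply, dualLefschetz_apply, form]
  simp only [Finset.sum_mul, map_sum, term, Finset.mul_sum]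
  rw [Finset.sum_comm]
  simp only [Finset.sum_add_distrib, Finset.sum_ite_eq', Finset.mem_univ, if_true,
    Finset.sum_sub_distrib, Finset.sum_const, Finset.card_univ, Nat.cast_smul_eq_nsmul]
  rw [Finset.sum_comm]

theorem dualLefschetz_form_pow_mul {m : ℕ} {x : ExteriorAlgebra ℝ M} (hx : x ∈ extPow m M)
    (r : ℕ) :
    F.dualLefschetz (F.form ^ (r + 1) * x) = F.form ^ (r + 1) * F.dualLefschetz x +
      (((r : ℝ) + 1) * ((Fintype.card J : ℝ) - m - r)) • (F.form ^ r * x) := by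
  induction r with
  | zero => simpa using F.dualLefschetz_form_mul hx
  | succ r ih =>
    rw [pow_succ', mul_assoc, F.dualLefschetz_form_mul (F.form_pow_mul_mem hx _), ih, mul_add,
      mul_smul_comm, ← mul_assoc, ← mul_assoc, ← pow_succ', ← pow_succ', add_assoc, ← add_smul]
    congr 2
    push_cast
    ring

theorem eq_zero_of_form_pow_mul_eq_zero {m r : ℕ} (h : m + r ≤ Fintype.card J)
    {x : ExteriorAlgebra ℝ M} (hx : x ∈ extPow m M) (h0 : F.form ^ r * x = 0) : x = 0 := by
  induction m using Nat.strong_induction_on generalizing r x with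
  | _ m ihm =>
  induction r generalizing x with
  | zero => simpa using h0
  | succ r ihr =>
    have hc : (((r : ℝ) + 1) * ((Fintype.card J : ℝ) - m - r)) ≠ 0 := by
      have : ((m + (r + 1) : ℕ) : ℝ) ≤ Fintype.card J := by exact_mod_cast h
      push_cast at this
      exact (mul_pos (by positivity) (by linarith)).ne'
    have key := F.dualLefschetz_form_pow_mul hx r
    rw [h0, map_zero] at key
    rcases lt_or_ge m 2 with hm | hm
    · rw [F.dualLefschetz_eq_zero hm hx, mul_zero, zero_add] at key
      exact ihr (by omega) hx ((smul_eq_zero.mp key.symm).resolve_left hc)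
    · have hΛ := F.dualLefschetz_mem hx
      have hL := F.form_pow_mul_mem hΛ 1
      rw [pow_one, show m - 2 + 2 * 1 = m by omega] at hL
      have hsum := ihr (by omega) (add_mem hL (Submodule.smul_mem _ _ hx)) (by
        rw [mul_add, mul_smul_comm, ← mul_assoc, ← pow_succ]
        exact key.symm)
      have hΛ0 : F.dualLefschetz x = 0 := by
        refine ihm (m - 2) (by omega) (r := r + 2) (by omega) hΛ ?_
        have := congrArg (F.form ^ (r + 1) * ·) hsum
        simpa only [mul_add, mul_smul_comm, h0, smul_zero, add_zero, mul_zero, ← mul_assoc,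
          ← pow_succ] using this
      rw [hΛ0, mul_zero, zero_add] at hsum
      exact (smul_eq_zero.mp hsum).resolve_left hc

end DarbouxFrame

theorem Fin.sum_univ_two_mul {A : Type*} [AddCommMonoid A] (n : ℕ) (f : Fin (2 * n) → A) :
    ∑ i, f i = ∑ j : Fin n, (f ⟨2 * j.1, by have := j.2; omega⟩ +
      f ⟨2 * j.1 + 1, by have := j.2; omega⟩) := by
  induction n with
  | zero => simp
  | succ n ih =>
    rw [Fin.sum_univ_castSucc (n := n), ← add_assoc]
    change ∑ i : Fin (2 * n + 1 + 1), f i = _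
    rw [Fin.sum_univ_castSucc, Fin.sum_univ_castSucc, ih]
    rfl

/-- The coordinate functionals on `ℝ^{2n}` as a Darboux frame. -/
noncomputable def stdDarbouxFrame (n : ℕ) :
    DarbouxFrame (Fin n) (Module.Dual ℝ (Fin (2 * n) → ℝ)) where
  a j := LinearMap.proj ⟨2 * j.1, by have := j.2; omega⟩
  b j := LinearMap.proj ⟨2 * j.1 + 1, by have := j.2; omega⟩
  A j := Module.Dual.eval ℝ _ (Pi.single ⟨2 * j.1, by have := j.2; omega⟩ 1)
  B j := Module.Dual.eval ℝ _ (Pi.single ⟨2 * j.1 + 1, by have := j.2; omega⟩ 1)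
  A_a j l := by simp [Pi.single_apply, Fin.ext_iff, eq_comm]
  A_b j l := by simp [Pi.single_apply, Fin.ext_iff]; omega
  B_a j l := by simp [Pi.single_apply, Fin.ext_iff]; omega
  B_b j l := by simp [Pi.single_apply, Fin.ext_iff, eq_comm]
  sum_coord v := by
    rw [← Fin.sum_univ_two_mul n fun i =>
      Module.Dual.eval ℝ (Fin (2 * n) → ℝ) (Pi.single i 1) v •
        (LinearMap.proj i : Module.Dual ℝ (Fin (2 * n) → ℝ))]
    ext i
    simp [Pi.single_apply]

theorem stdDarbouxFrame_form (n : ℕ) : (stdDarbouxFrame n).form = symplForm n :=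
  rfl

theorem finrank_extPow (n m : ℕ) :
    Module.finrank ℝ (extPow m (Module.Dual ℝ (Fin (2 * n) → ℝ))) = (2 * n).choose m := by
  have := exteriorPower.finrank_eq ℝ m (M := Module.Dual ℝ (Fin (2 * n) → ℝ))
  rwa [Subspace.dual_finrank_eq, Module.finrank_fin_fun] at this

/-- Lemma 2.9 of the paper; the Lefschetz operator. For `1 ≤ k ≤ n`,
wedging with `ω^k` is a linear isomorphism `⋀^{n-k}(ℝ^{2n})^* → ⋀^{n+k}(ℝ^{2n})^*`:
it maps `⋀^{n-k}` into `⋀^{n+k}`, is injective on `⋀^{n-k}` and surjective onto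
`⋀^{n+k}`. -/
theorem stmt17 (n k : ℕ) (hk1 : 1 ≤ k) (hkn : k ≤ n) :
    (∀ x ∈ extPow (n - k) (Module.Dual ℝ (Fin (2*n) → ℝ)),
        x * symplForm n ^ k ∈ extPow (n + k) (Module.Dual ℝ (Fin (2*n) → ℝ))) ∧
    (∀ x ∈ extPow (n - k) (Module.Dual ℝ (Fin (2*n) → ℝ)),
      ∀ y ∈ extPow (n - k) (Module.Dual ℝ (Fin (2*n) → ℝ)),
        x * symplForm n ^ k = y * symplForm n ^ k → x = y) ∧
    (∀ z ∈ extPow (n + k) (Module.Dual ℝ (Fin (2*n) → ℝ)),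
      ∃ x ∈ extPow (n - k) (Module.Dual ℝ (Fin (2*n) → ℝ)),
        x * symplForm n ^ k = z) := by
  have hcomm (x : ExteriorAlgebra ℝ (Module.Dual ℝ (Fin (2 * n) → ℝ))) :
      x * symplForm n ^ k = symplForm n ^ k * x :=
    (((stdDarbouxFrame n).commute_form x).pow_left k).eq.symm
  have hmap : ∀ x ∈ extPow (n - k) (Module.Dual ℝ (Fin (2*n) → ℝ)),
      x * symplForm n ^ k ∈ extPow (n + k) (Module.Dual ℝ (Fin (2*n) → ℝ)) := by
    intro x hx
    have := (stdDarbouxFrame n).form_pow_mul_mem hx k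
    rwa [show n - k + 2 * k = n + k by omega, stdDarbouxFrame_form, ← hcomm] at this
  have hinj : ∀ x ∈ extPow (n - k) (Module.Dual ℝ (Fin (2*n) → ℝ)),
      ∀ y ∈ extPow (n - k) (Module.Dual ℝ (Fin (2*n) → ℝ)),
        x * symplForm n ^ k = y * symplForm n ^ k → x = y := by
    intro x hx y hy hxy
    refine sub_eq_zero.mp <| (stdDarbouxFrame n).eq_zero_of_form_pow_mul_eq_zero
      (r := k) (by rw [Fintype.card_fin]; omega) (sub_mem hx hy) ?_
    rw [stdDarbouxFrame_form, ← hcomm, sub_mul, hxy, sub_self]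
  refine ⟨hmap, hinj, fun z hz => ?_⟩
  let f := (LinearMap.mulRight ℝ (symplForm n ^ k)).restrict hmap
  have hf : Function.Injective f := fun x y hxy =>
    Subtype.ext (hinj x x.2 y y.2 (congrArg Subtype.val hxy))
  have hrank : Module.finrank ℝ (extPow (n - k) (Module.Dual ℝ (Fin (2*n) → ℝ))) =
      Module.finrank ℝ (extPow (n + k) (Module.Dual ℝ (Fin (2*n) → ℝ))) := by
    rw [finrank_extPow, finrank_extPow]
    exact Nat.choose_symm_of_eq_add (by omega)
  have hfin (m : ℕ) : FiniteDimensional ℝ (extPow m (Module.Dual ℝ (Fin (2*n) → ℝ))) :=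
    inferInstanceAs (Module.Finite ℝ (⋀[ℝ]^m (Module.Dual ℝ (Fin (2*n) → ℝ))))
  have := hfin (n - k)
  have := hfin (n + k)
  obtain ⟨x, hx⟩ := (LinearMap.injective_iff_surjective_of_finrank_eq_finrank hrank).mp hf ⟨z, hz⟩
  exact ⟨x, x.2, congrArg Subtype.val hx⟩
end

section
/- Let X be a metric space, γ, α ∈ (0,1], and let f, g : X → ℝ^m be bounded γ-Hölder maps. Let u : ℝ^m → ℝ be α-Hölder, i.e. [u]_α = sup_{p ≠ q} |u(p) − u(q)|/|p−q|^α < ∞. Then: (1) u∘f is a bounded (α·γ)-Hölder function on X, with [u∘f]_{αγ} ≤ [u]_α·([f]_γ)^α; and (2) for every 0 < β < α there is a constant C, depending only on α, β, γ, such that ‖u∘f − u∘g‖_{C^{0,βγ}} ≤ C·[u]_α·( ‖f‖_{C^{0,γ}} + ‖g‖_{C^{0,γ}} )^β · ( ‖f − g‖_∞ )^{α−β}. -/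
/-- Interpolation: a power of `t` is controlled by powers of two upper bounds of `t`. -/
theorem rpow_le_rpow_mul_rpow_sub {α β t a b : ℝ} (hβ : 0 ≤ β) (hβα : β ≤ α) (ht : 0 ≤ t)
    (hta : t ≤ a) (htb : t ≤ b) : t ^ α ≤ a ^ β * b ^ (α - β) := by
  have hsub : 0 ≤ α - β := sub_nonneg.2 hβα
  calc t ^ α = t ^ β * t ^ (α - β) := by
        rw [← Real.rpow_add_of_nonneg ht hβ hsub, add_sub_cancel]
    _ ≤ a ^ β * b ^ (α - β) :=
        mul_le_mul (Real.rpow_le_rpow ht hta hβ) (Real.rpow_le_rpow ht htb hsub)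
          (Real.rpow_nonneg ht _) (Real.rpow_nonneg (ht.trans hta) _)

theorem mul_rpow_rpow_dist {X : Type*} [PseudoMetricSpace X] {c : ℝ} (hc : 0 ≤ c) (γ δ : ℝ)
    (x y : X) : (c * dist x y ^ γ) ^ δ = c ^ δ * dist x y ^ (δ * γ) := by
  rw [Real.mul_rpow hc (Real.rpow_nonneg dist_nonneg _), ← Real.rpow_mul dist_nonneg,
    mul_comm γ δ]

/-- The `α`-Hölder bound for `u` as a function of an upper bound for the distance. -/
theorem abs_sub_le_mul_rpow_of_dist_le {E : Type*} [PseudoMetricSpace E] {u : E → ℝ}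
    {K α r : ℝ} (hK : 0 ≤ K) (hα : 0 ≤ α) (hu : ∀ p q : E, |u p - u q| ≤ K * dist p q ^ α)
    {p q : E} (hpq : dist p q ≤ r) : |u p - u q| ≤ K * r ^ α :=
  (hu p q).trans (mul_le_mul_of_nonneg_left (Real.rpow_le_rpow dist_nonneg hpq hα) hK)

/-- Proposition 2.21 of the paper; composition with Hölder functions.
(1) If `f : X → ℝ^m` is bounded `γ`-Hölder and `u : ℝ^m → ℝ` is `α`-Hölder, then `u∘f` is
bounded `(αγ)`-Hölder with `[u∘f]_{αγ} ≤ [u]_α [f]_γ^α`.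
(2) For `0 < β < α` there is `C = C(α,β,γ)` with
`‖u∘f - u∘g‖_{C^{0,βγ}} ≤ C [u]_α (‖f‖_{C^{0,γ}} + ‖g‖_{C^{0,γ}})^β ‖f-g‖_∞^{α-β}`. -/
theorem stmt18 (α β γ : ℝ) (hγ0 : 0 < γ) (hγ1 : γ ≤ 1) (hα0 : 0 < α) (hα1 : α ≤ 1)
    (hβ0 : 0 < β) (hβα : β < α) :
    (∀ (X : Type u) [MetricSpace X], ∀ (m : ℕ)
        (f : X → EuclideanSpace ℝ (Fin m)) (u : EuclideanSpace ℝ (Fin m) → ℝ)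
        (Cu Cf : ℝ), 0 ≤ Cu → 0 ≤ Cf →
      (∀ p q : EuclideanSpace ℝ (Fin m), |u p - u q| ≤ Cu * dist p q ^ α) →
      (∀ x y : X, dist (f x) (f y) ≤ Cf * dist x y ^ γ) →
      (∃ R : ℝ, ∀ x : X, ‖f x‖ ≤ R) →
      ((∃ R' : ℝ, ∀ x : X, |u (f x)| ≤ R') ∧
        ∀ x y : X, |u (f x) - u (f y)| ≤ Cu * Cf ^ α * dist x y ^ (α * γ))) ∧
    (∃ C : ℝ, ∀ (X : Type u) [MetricSpace X], ∀ (m : ℕ)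
        (f g : X → EuclideanSpace ℝ (Fin m)) (u : EuclideanSpace ℝ (Fin m) → ℝ)
        (Cu M₁ M₂ D : ℝ), 0 ≤ Cu → 0 ≤ M₁ → 0 ≤ M₂ → 0 ≤ D →
      (∀ p q : EuclideanSpace ℝ (Fin m), |u p - u q| ≤ Cu * dist p q ^ α) →
      (∀ x : X, ‖f x‖ ≤ M₁) →
      (∀ x y : X, dist (f x) (f y) ≤ M₁ * dist x y ^ γ) →
      (∀ x : X, ‖g x‖ ≤ M₂) →
      (∀ x y : X, dist (g x) (g y) ≤ M₂ * dist x y ^ γ) →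
      (∀ x : X, dist (f x) (g x) ≤ D) →
      ((∀ x : X, |u (f x) - u (g x)| ≤ C * Cu * (M₁ + M₂) ^ β * D ^ (α - β)) ∧
        ∀ x y : X, |(u (f x) - u (g x)) - (u (f y) - u (g y))| ≤
          C * Cu * (M₁ + M₂) ^ β * D ^ (α - β) * dist x y ^ (β * γ))) := by
  refine ⟨?_, 2, ?_⟩
  · intro X _ m f u Cu Cf hCu hCf hu hf ⟨R, hR⟩
    refine ⟨⟨|u 0| + Cu * R ^ α, fun x => ?_⟩, fun x y => ?_⟩
    · have h := abs_sub_le_mul_rpow_of_dist_le hCu hα0.le hu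
        ((dist_zero_right (f x)).trans_le (hR x))
      linarith [abs_sub_abs_le_abs_sub (u (f x)) (u 0)]
    · rw [mul_assoc, ← mul_rpow_rpow_dist hCf]
      exact abs_sub_le_mul_rpow_of_dist_le hCu hα0.le hu (hf x y)
  · intro X _ m f g u Cu M₁ M₂ D hCu hM₁ hM₂ hD hu hfb hf hgb hg hfg
    have hM : 0 ≤ M₁ + M₂ := add_nonneg hM₁ hM₂
    refine ⟨fun x => ?_, fun x y => ?_⟩
    · have hsum : dist (f x) (g x) ≤ M₁ + M₂ :=
        (dist_le_norm_add_norm _ _).trans (add_le_add (hfb x) (hgb x))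
      have hpow := mul_le_mul_of_nonneg_left
        (rpow_le_rpow_mul_rpow_sub hβ0.le hβα.le dist_nonneg hsum (hfg x)) hCu
      have hnonneg : 0 ≤ Cu * ((M₁ + M₂) ^ β * D ^ (α - β)) := by positivity
      linarith [hu (f x) (g x)]
    · have hdist : 0 ≤ dist x y ^ γ := Real.rpow_nonneg dist_nonneg _
      set S := (M₁ + M₂) * dist x y ^ γ with hS
      have hS0 : 0 ≤ S := mul_nonneg hM hdist
      have hfS : dist (f x) (f y) ≤ S :=
        (hf x y).trans (mul_le_mul_of_nonneg_right (by linarith) hdist)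
      have hgS : dist (g x) (g y) ≤ S :=
        (hg x y).trans (mul_le_mul_of_nonneg_right (by linarith) hdist)
      have key : |(u (f x) - u (g x)) - (u (f y) - u (g y))| ≤ 2 * (Cu * min S D ^ α) := by
        rcases min_choice S D with h | h <;> rw [h]
        · have h₁ := abs_sub_le_mul_rpow_of_dist_le hCu hα0.le hu hfS
          have h₂ := abs_sub_le_mul_rpow_of_dist_le hCu hα0.le hu hgS
          rw [sub_sub_sub_comm]
          linarith [abs_sub (u (f x) - u (f y)) (u (g x) - u (g y))]
        · have h₁ := abs_sub_le_mul_rpow_of_dist_le hCu hα0.le hu (hfg x)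
          have h₂ := abs_sub_le_mul_rpow_of_dist_le hCu hα0.le hu (hfg y)
          linarith [abs_sub (u (f x) - u (g x)) (u (f y) - u (g y))]
      have hpow := mul_le_mul_of_nonneg_left
        (rpow_le_rpow_mul_rpow_sub hβ0.le hβα.le (le_min hS0 hD) (min_le_left S D)
          (min_le_right S D)) hCu
      calc |(u (f x) - u (g x)) - (u (f y) - u (g y))|
          ≤ 2 * (Cu * (S ^ β * D ^ (α - β))) := by linarith
        _ = 2 * Cu * (M₁ + M₂) ^ β * D ^ (α - β) * dist x y ^ (β * γ) := by
            rw [hS, mul_rpow_rpow_dist hM]; ring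
end

section
/- Let 0 < γ < 1 and let f : ℝ^n → ℝ be a bounded γ-Hölder function. Then the following are equivalent: (1) there exists a sequence of C^∞ functions f_k : ℝ^n → ℝ such that for every compact set K ⊆ ℝ^n, ‖f_k − f‖_{C^{0,γ}(K)} → 0 as k → ∞ (where ‖h‖_{C^{0,γ}(K)} = sup_K |h| + sup{ |h(x) − h(y)|/|x−y|^γ : x, y ∈ K, x ≠ y }); (2) f belongs to the class C^{0,γ+}: for every compact set K ⊆ ℝ^n, sup{ |f(x) − f(y)|/|x−y|^γ : x, y ∈ K, 0 < |x−y| ≤ s } → 0 as s → 0+. -/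
open MeasureTheory Metric Filter Topology
open scoped Convolution

/-- Convolution against a normalized bump commutes with taking the increment of a function in a
fixed direction. -/
lemma ContDiffBump.normed_convolution_sub_translate {n : ℕ}
    (φ : ContDiffBump (0 : EuclideanSpace ℝ (Fin n))) {f : EuclideanSpace ℝ (Fin n) → ℝ}
    (hf : Continuous f) (x v : EuclideanSpace ℝ (Fin n)) :
    (φ.normed volume ⋆[ContinuousLinearMap.lsmul ℝ ℝ, volume] fun z => f z - f (z + v)) x =
      (φ.normed volume ⋆[ContinuousLinearMap.lsmul ℝ ℝ, volume] f) x -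
        (φ.normed volume ⋆[ContinuousLinearMap.lsmul ℝ ℝ, volume] f) (x + v) := by
  have hex : ConvolutionExists (φ.normed volume) f (ContinuousLinearMap.lsmul ℝ ℝ) volume :=
    φ.hasCompactSupport_normed.convolutionExists_left _ φ.continuous_normed
      hf.locallyIntegrable
  unfold convolution
  rw [← integral_sub (hex x) (hex (x + v))]
  refine integral_congr_ae (Eventually.of_forall fun t => ?_)
  simp only [map_sub]
  rw [sub_add_eq_add_sub]

/-- A `C^1` function is `o(|x - y|^γ)`, uniformly on compact sets, for every `γ < 1`. -/
lemma exists_abs_sub_le_mul_dist_rpow_of_contDiff {n : ℕ} {g : EuclideanSpace ℝ (Fin n) → ℝ}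
    (hg : ContDiff ℝ 1 g) {γ : ℝ} (hγ : γ < 1) {K : Set (EuclideanSpace ℝ (Fin n))}
    (hK : IsCompact K) {δ : ℝ} (hδ : 0 < δ) :
    ∃ s : ℝ, 0 < s ∧ ∀ x ∈ K, ∀ y ∈ K, dist x y ≤ s → |g x - g y| ≤ δ * dist x y ^ γ := by
  obtain ⟨R, hR⟩ := hK.isBounded.subset_closedBall 0
  obtain ⟨L, hL⟩ := hg.contDiffOn.exists_lipschitzOnWith one_ne_zero
    (convex_closedBall (0 : EuclideanSpace ℝ (Fin n)) R) (isCompact_closedBall _ _)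
  have hlim : Tendsto (fun r : ℝ => (L : ℝ) * r ^ (1 - γ)) (𝓝 0) (𝓝 0) := by
    have h := (Real.continuousAt_rpow_const 0 (1 - γ) (Or.inr (by linarith))).tendsto.const_mul
      (L : ℝ)
    simpa [Real.zero_rpow (by linarith : 1 - γ ≠ 0)] using h
  obtain ⟨s, hs, hs'⟩ := Metric.eventually_nhds_iff.1 (hlim.eventually (ge_mem_nhds hδ))
  refine ⟨s / 2, half_pos hs, fun x hx y hy hxy => ?_⟩
  rcases eq_or_ne x y with rfl | hne
  · simpa using mul_nonneg hδ.le (Real.rpow_nonneg le_rfl γ)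
  have hd : 0 < dist x y := dist_pos.2 hne
  have hsmall : (L : ℝ) * dist x y ^ (1 - γ) ≤ δ :=
    hs' (by rw [Real.dist_eq, sub_zero, abs_of_pos hd]; linarith)
  calc |g x - g y| ≤ L * dist x y := hL.dist_le_mul x (hR hx) y (hR hy)
    _ = L * dist x y ^ (1 - γ) * dist x y ^ γ := by
      rw [mul_assoc, ← Real.rpow_add hd]; simp
    _ ≤ δ * dist x y ^ γ := by gcongr

/-- Proposition 2.16 of the paper. Let `0 < γ < 1`. A bounded
`γ`-Hölder function `f : ℝ^n → ℝ` can be approximated by smooth functions in the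
`C^{0,γ}(K)` norm on every compact set `K` if and only if `f` belongs to the class
`C^{0,γ+}`. -/
theorem stmt19 (n : ℕ) (γ : ℝ) (hγ0 : 0 < γ) (hγ1 : γ < 1)
    (f : EuclideanSpace ℝ (Fin n) → ℝ)
    (hb : ∃ B : ℝ, ∀ x, |f x| ≤ B)
    (hH : ∃ C : ℝ, ∀ x y, |f x - f y| ≤ C * dist x y ^ γ) :
    (∃ fk : ℕ → EuclideanSpace ℝ (Fin n) → ℝ,
      (∀ k, ContDiff ℝ (⊤ : ℕ∞) (fk k)) ∧
      ∀ K : Set (EuclideanSpace ℝ (Fin n)), IsCompact K →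
        ∀ δ : ℝ, 0 < δ → ∃ N : ℕ, ∀ k ≥ N,
          (∀ x ∈ K, |fk k x - f x| ≤ δ) ∧
          (∀ x ∈ K, ∀ y ∈ K, |(fk k x - f x) - (fk k y - f y)| ≤ δ * dist x y ^ γ))
    ↔
    (∀ K : Set (EuclideanSpace ℝ (Fin n)), IsCompact K →
      ∀ δ : ℝ, 0 < δ → ∃ s : ℝ, 0 < s ∧ ∀ x ∈ K, ∀ y ∈ K, dist x y ≤ s →
        |f x - f y| ≤ δ * dist x y ^ γ) := by
  obtain ⟨C, hC⟩ := hH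
  have hC' : ∀ x y, |f x - f y| ≤ |C| * dist x y ^ γ := fun x y =>
    (hC x y).trans (by gcongr; exact le_abs_self C)
  constructor
  · rintro ⟨fk, hsmooth, happrox⟩ K hK δ hδ
    obtain ⟨N, hN⟩ := happrox K hK (δ / 2) (half_pos hδ)
    obtain ⟨s, hs, hs'⟩ := exists_abs_sub_le_mul_dist_rpow_of_contDiff
      ((hsmooth N).of_le (by exact_mod_cast le_top)) hγ1 hK (half_pos hδ)
    refine ⟨s, hs, fun x hx y hy hxy => ?_⟩
    have h₁ := abs_le.1 ((hN N le_rfl).2 x hx y hy)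
    have h₂ := abs_le.1 (hs' x hx y hy hxy)
    rw [abs_le]
    constructor <;> linarith [h₁.1, h₁.2, h₂.1, h₂.2]
  · intro hf
    have hcont : Continuous f := by
      refine continuous_iff_continuousAt.2 fun x => ?_
      rw [ContinuousAt, tendsto_iff_dist_tendsto_zero]
      have h : Tendsto (fun y => |C| * dist y x ^ γ) (𝓝 x) (𝓝 (|C| * dist x x ^ γ)) :=
        Continuous.tendsto (f := fun y => |C| * dist y x ^ γ) (by
          exact continuous_const.mul
            ((continuous_id.dist continuous_const).rpow_const fun _ => Or.inr hγ0.le)) x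
      rw [dist_self, Real.zero_rpow hγ0.ne', mul_zero] at h
      exact squeeze_zero (fun _ => dist_nonneg) (fun y => hC' y x) h
    let φ : ℕ → ContDiffBump (0 : EuclideanSpace ℝ (Fin n)) := fun k =>
      ⟨1 / ((k : ℝ) + 1) / 2, 1 / ((k : ℝ) + 1), by positivity, half_lt_self (by positivity)⟩
    let fk : ℕ → EuclideanSpace ℝ (Fin n) → ℝ := fun k =>
      (φ k).normed volume ⋆[ContinuousLinearMap.lsmul ℝ ℝ, volume] f
    have hunif : ∀ k x, |fk k x - f x| ≤ |C| * (1 / ((k : ℝ) + 1)) ^ γ := fun k x =>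
      (φ k).dist_normed_convolution_le hcont.aestronglyMeasurable fun z hz =>
        (hC' z x).trans (by gcongr; exact (mem_ball.1 hz).le)
    have hlim : Tendsto (fun k : ℕ => |C| * (1 / ((k : ℝ) + 1)) ^ γ) atTop (𝓝 0) := by
      have h := ((tendsto_one_div_add_atTop_nhds_zero_nat (𝕜 := ℝ)).rpow_const
        (p := γ) (Or.inr hγ0.le)).const_mul |C|
      simpa only [Real.zero_rpow hγ0.ne', mul_zero] using h
    refine ⟨fk, fun k => (φ k).hasCompactSupport_normed.contDiff_convolution_left _
      (φ k).contDiff_normed hcont.locallyIntegrable, fun K hK δ hδ => ?_⟩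
    obtain ⟨s, hs, hs'⟩ := hf (cthickening 1 K) hK.cthickening (δ / 2) (half_pos hδ)
    have hη : 0 < min δ (δ / 2 * s ^ γ) := by positivity
    obtain ⟨N, hN⟩ := eventually_atTop.1 (hlim.eventually (ge_mem_nhds hη))
    have hsup : ∀ k ≥ N, ∀ x, |fk k x - f x| ≤ min δ (δ / 2 * s ^ γ) := fun k hk x =>
      (hunif k x).trans (hN k hk)
    refine ⟨N, fun k hk => ⟨fun x _ => (hsup k hk x).trans (min_le_left _ _),
      fun x hx y hy => ?_⟩⟩
    rcases le_or_gt (dist x y) s with hxy | hxy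
    · have hball : ∀ z ∈ ball x (φ k).rOut, dist z x ≤ 1 := fun z hz => by
        refine (mem_ball.1 hz).le.trans ?_
        exact (div_le_one (by positivity)).2 (by simp)
      have hincr : ∀ z, dist z x ≤ 1 → |f z - f (z + (y - x))| ≤ δ / 2 * dist x y ^ γ := by
        intro z hz
        have hd : dist z (z + (y - x)) = dist x y := by
          rw [dist_self_add_right, dist_eq_norm, norm_sub_rev]
        have hd' : dist (z + (y - x)) y = dist z x := by
          rw [dist_eq_norm, dist_eq_norm]; congr 1; abel
        rw [← hd]
        exact hs' z (mem_cthickening_of_dist_le z x 1 K hx hz) _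
          (mem_cthickening_of_dist_le _ y 1 K hy (hd'.trans_le hz)) (hd.trans_le hxy)
      have hmain := (φ k).dist_normed_convolution_le (μ := volume)
        (g := fun z => f z - f (z + (y - x))) (x₀ := x) (ε := δ * dist x y ^ γ)
        (by fun_prop) fun z hz => by
          have h₁ := hincr z (hball z hz)
          have h₂ := hincr x (by simp)
          rw [Real.dist_eq]
          refine (abs_sub _ _).trans ?_
          linarith
      rw [(φ k).normed_convolution_sub_translate hcont, Real.dist_eq,
        add_sub_cancel] at hmain
      rwa [sub_sub_sub_comm]
    · have hpow : s ^ γ ≤ dist x y ^ γ := by gcongr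
      have h₁ := (hsup k hk x).trans (min_le_right _ _)
      have h₂ := (hsup k hk y).trans (min_le_right _ _)
      refine (abs_sub _ _).trans ?_
      nlinarith
end
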